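/- (Unknown variance.) Assume N, M, n, m → ∞, p = n/N → 0, q = m/M → 0, and restrict the alternative to matrices S ∈ S_{nm,a} satisfying max_{i,j} s_{ij}/(σ√(NM)) → 0. If (a/σ)√(n m p q) → ∞ or liminf (a/σ)√(nm)/√(2(n log(1/p) + m log(1/q))) > 1, then the studentized test ψ̂* — with H → ∞ such that H = O((a² n m p q/σ²)^{1/4}) and with T_{nm} = √((2+δ) log(C(N,n)·C(M,m))) for some sufficiently small δ > 0 — has total error γ_{nm,a}(ψ̂*) → 0, i.e. α(ψ̂*) → 0 and the second-type error over the restricted alternative tends to 0. -/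

import Mathlib

/-!
The hypotheses `H → ∞` and `H = O((a² n m p q / σ²)^{1/4})` already force
`x = (a/σ) √(n m p q) → ∞`, so the linear statistic alone detects every admissible alternative,
and the scan statistic matters only for the first-type error.

First-type error (`typeI_bound`): by Chebyshev (`sumsq_lower`), `σ̂² ≥ c σ²` with probability
tending to one for every fixed `c < 1`. On that event a rejection requires `t_lin > √c σ H` or
`Y_C > √c σ T` for some submatrix `C`. The Gaussian tail bound (`noise_tail`) makes the first
event negligible as `H → ∞`. A union bound over the `G` submatrices gives
`G · exp(-c (2 + δ) log G / 2) = G^{-κ}` for the second, with `κ = c (1 + δ/2) - 1 > 0` when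
`c = 1/(1 + δ/4)`, and `G ≥ N/n → ∞`. No smallness of `δ` is needed.

Second-type error (`typeII_bound`): put `L = Σ s / (σ √(NM)) ≥ x` and
`ε = max s / (σ √(NM)) → 0`. The studentisation is harmless although `σ̂` need not be close to
`σ`: from `Σ s² ≤ max s · Σ s` one gets `E σ̂² ≤ σ² (1 + ε L)`, so by Markov (`sumsq_upper`)
`σ̂² < K σ² (1 + ε L)` with probability at least `1 - 1/K`, while `t_lin > σ L / 2` up to
probability `exp(-L²/8)`. Since `H² = O(x) = O(L)`, the inequality `H² K (1 + ε L) < L² / 4`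
holds eventually for each fixed `K`, and then the linear part of the test rejects.
-/

open MeasureTheory ProbabilityTheory Filter Topology
open scoped Classical

noncomputable section

/-- Standard normal cumulative distribution function `Φ`. -/
def Phi (x : ℝ) : ℝ := ((gaussianReal 0 1) (Set.Iic x)).toReal

/-- Law `P_S` of the `N × M` observation matrix `Y_{ij} = s_{ij} + ξ_{ij}`
with i.i.d. standard Gaussian noise. -/
def matLaw (N M : ℕ) (S : Fin N → Fin M → ℝ) : Measure ((Fin N × Fin M) → ℝ) :=
  Measure.pi fun ij => gaussianReal (S ij.1 ij.2) 1

/-- First-type error `α(ψ) = E_0 ψ`. -/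
def alphaErr (N M : ℕ) (ψ : ((Fin N × Fin M) → ℝ) → ℝ) : ℝ :=
  ∫ y, ψ y ∂(matLaw N M fun _ _ => 0)

/-- Second-type error `β(ψ, S) = E_S (1 - ψ)`. -/
def betaErr (N M : ℕ) (S : Fin N → Fin M → ℝ) (ψ : ((Fin N × Fin M) → ℝ) → ℝ) : ℝ :=
  ∫ y, (1 - ψ y) ∂(matLaw N M S)

/-- The alternative class `S_{nm,a}`: some `n × m` submatrix `C = A × B` has all entries `≥ a`,
and all other entries vanish. -/
def SAlt (N M n m : ℕ) (a : ℝ) : Set (Fin N → Fin M → ℝ) :=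
  {S | ∃ (A : Finset (Fin N)) (B : Finset (Fin M)), A.card = n ∧ B.card = m ∧
      (∀ i j, i ∈ A → j ∈ B → a ≤ S i j) ∧ ∀ i j, ¬(i ∈ A ∧ j ∈ B) → S i j = 0}

/-- Maximal second-type error `β_{nm,a}(ψ)`. -/
def betaMax (N M n m : ℕ) (a : ℝ) (ψ : ((Fin N × Fin M) → ℝ) → ℝ) : ℝ :=
  sSup ((fun S => betaErr N M S ψ) '' SAlt N M n m a)

/-- Linear statistic `t_lin`. -/
def tlin (N M : ℕ) (y : (Fin N × Fin M) → ℝ) : ℝ :=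
  (∑ ij : Fin N × Fin M, y ij) / Real.sqrt ((N : ℝ) * M)

/-- Linear test `ψ^lin_H = 1{t_lin > H}`. -/
def psiLin (N M : ℕ) (H : ℝ) (y : (Fin N × Fin M) → ℝ) : ℝ :=
  if H < tlin N M y then 1 else 0

/-- Normalized submatrix sum `Y_C` for `C = A × B`. -/
def YC (N M : ℕ) (y : (Fin N × Fin M) → ℝ)
    (A : Finset (Fin N)) (B : Finset (Fin M)) : ℝ :=
  (∑ i ∈ A, ∑ j ∈ B, y (i, j)) / Real.sqrt ((A.card : ℝ) * B.card)

/-- Scan statistic `t_max = max_{C ∈ C_{nm}} Y_C`. -/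
def tmax (N M n m : ℕ) (y : (Fin N × Fin M) → ℝ) : ℝ :=
  sSup {v | ∃ (A : Finset (Fin N)) (B : Finset (Fin M)),
    A.card = n ∧ B.card = m ∧ v = YC N M y A B}

/-- `G_{nm} = C(N,n) · C(M,m)`, the number of `n × m` submatrices. -/
def Gnm (N M n m : ℕ) : ℕ := N.choose n * M.choose m

/-- Threshold `T_{nm} = √(2 log G_{nm})`. -/
def Tnm (N M n m : ℕ) : ℝ := Real.sqrt (2 * Real.log (Gnm N M n m : ℝ))

/-- Scan test `ψ^max_T = 1{t_max > T}`. -/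
def psiMax (N M n m : ℕ) (T : ℝ) (y : (Fin N × Fin M) → ℝ) : ℝ :=
  if T < tmax N M n m y then 1 else 0

/-- Law of the observation matrix `Y_{ij} = s_{ij} + σ ξ_{ij}` with noise level `σ`. -/
def matLawV (N M : ℕ) (σ : ℝ) (S : Fin N → Fin M → ℝ) :
    Measure ((Fin N × Fin M) → ℝ) :=
  Measure.pi fun ij => gaussianReal (S ij.1 ij.2) (Real.toNNReal (σ ^ 2))

/-- Variance estimator `σ̂ = √((NM)⁻¹ Σ Y_{ij}²)`. -/
def sigmaHat (N M : ℕ) (y : (Fin N × Fin M) → ℝ) : ℝ :=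
  Real.sqrt ((∑ ij : Fin N × Fin M, (y ij) ^ 2) / ((N : ℝ) * M))

/-- Studentized test `ψ̂* = max{1{t̂_lin > H}, 1{t̂_max > T}}`. -/
def psiHatStar (N M n m : ℕ) (H T : ℝ) (y : (Fin N × Fin M) → ℝ) : ℝ :=
  max (if H < tlin N M y / sigmaHat N M y then 1 else 0)
    (if T < tmax N M n m y / sigmaHat N M y then 1 else 0)

/-! ### Gaussian product measures -/

/-- A centred Gaussian coordinate, possibly with its sign flipped (`e = ±1`), is sub-Gaussian
with variance proxy `σ²`. -/
lemma subG_coord {ι : Type*} [Fintype ι] (s : ι → ℝ) (σ e : ℝ) (he : e ^ 2 = 1) (i : ι) :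
    HasSubgaussianMGF (fun y : ι → ℝ => e * (y i - s i)) (Real.toNNReal (σ ^ 2))
      (Measure.pi fun i => gaussianReal (s i) (Real.toNNReal (σ ^ 2))) := by
  have key : HasSubgaussianMGF (fun x : ℝ => e * (x - s i)) (Real.toNNReal (σ ^ 2))
      (gaussianReal (s i) (Real.toNNReal (σ ^ 2))) := by
    constructor
    · intro t
      have h := (integrable_exp_mul_gaussianReal (μ := s i) (v := Real.toNNReal (σ ^ 2))
        (t * e)).const_mul (Real.exp (-(t * e * s i)))
      refine h.congr (ae_of_all _ fun x => ?_)
      simp only [← Real.exp_add]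
      congr 1; ring
    · intro t
      have h : (fun ω : ℝ => Real.exp (t * (e * (ω - s i))))
          = fun ω => Real.exp (-(t * e * s i)) * Real.exp (t * e * ω) := by
        funext x
        rw [← Real.exp_add]; congr 1; ring
      have h2 := congrFun (mgf_fun_id_gaussianReal (μ := s i) (v := Real.toNNReal (σ ^ 2))) (t * e)
      simp only [mgf] at h2 ⊢
      rw [h, integral_const_mul, h2, ← Real.exp_add]
      apply le_of_eq
      congr 1
      have : (t * e) ^ 2 = t ^ 2 := by rw [mul_pow, he, mul_one]
      rw [this]; ring
  have hp := measurePreserving_eval (fun i => gaussianReal (s i) (Real.toNNReal (σ ^ 2))) i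
  rw [← hp.map_eq] at key
  have h := key.of_map (Y := Function.eval i) hp.measurable.aemeasurable
  exact h

lemma noise_tail {ι : Type*} [Fintype ι] (s : ι → ℝ) (σ e : ℝ) (he : e ^ 2 = 1)
    (F : Finset ι) {u : ℝ} (hu : 0 ≤ u) :
    (Measure.pi fun i => gaussianReal (s i) (Real.toNNReal (σ ^ 2))).real
      {y | u ≤ ∑ i ∈ F, e * (y i - s i)} ≤ Real.exp (-u ^ 2 / (2 * (F.card * σ ^ 2))) := by
  have hind : iIndepFun (fun i (y : ι → ℝ) => e * (y i - s i))
      (Measure.pi fun i => gaussianReal (s i) (Real.toNNReal (σ ^ 2))) :=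
    iIndepFun_pi (X := fun i (x : ℝ) => e * (x - s i)) (fun i => by fun_prop)
  have h := HasSubgaussianMGF.measure_sum_ge_le_of_iIndepFun hind (s := F)
    (c := fun _ => Real.toNNReal (σ ^ 2)) (fun i _ => subG_coord s σ e he i) hu
  simpa [Real.coe_toNNReal _ (sq_nonneg σ)] using h

lemma memLp_sq_gaussian (s : ℝ) (v : NNReal) :
    MemLp (fun x : ℝ => x ^ 2) 2 (gaussianReal s v) := by
  have h := memLp_id_gaussianReal (μ := s) (v := v) 4
  have := (MemLp.mul (p := 4) (q := 4) (r := 2) h h (hpqr := ⟨by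
    rw [← two_mul]
    rw [show (4 : ENNReal) = 2 * 2 by norm_num, ENNReal.mul_inv (by simp) (by simp), ← mul_assoc,
      ENNReal.mul_inv_cancel (by simp) (by simp), one_mul]⟩))
  refine this.ae_eq (ae_of_all _ fun x => ?_)
  simp [sq]

lemma integral_sq_gaussian (s : ℝ) (v : NNReal) :
    ∫ x, x ^ 2 ∂(gaussianReal s v) = v + s ^ 2 := by
  have h := variance_eq_sub (μ := gaussianReal s v) (X := id)
    (by simpa using memLp_id_gaussianReal (μ := s) (v := v) 2)
  rw [variance_id_gaussianReal] at h
  simp [integral_id_gaussianReal] at h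
  linarith

/-- The variance of a squared standard Gaussian; only its finiteness matters. -/
def chiVar : ℝ := Var[fun x : ℝ => x ^ 2; gaussianReal 0 1]

lemma variance_sq_gaussian (σ : ℝ) :
    Var[fun x : ℝ => x ^ 2; gaussianReal 0 (Real.toNNReal (σ ^ 2))] = σ ^ 4 * chiVar := by
  have hm : gaussianReal 0 (Real.toNNReal (σ ^ 2)) = (gaussianReal 0 1).map (σ * ·) := by
    rw [gaussianReal_map_const_mul]
    congr 1
    · simp
    · ext; simp [sq_nonneg]
  rw [hm, variance_map (by fun_prop) (by fun_prop)]
  have : ((fun x : ℝ => x ^ 2) ∘ fun x => σ * x) = fun x => σ ^ 2 * x ^ 2 := by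
    funext x; simp [mul_pow]
  rw [this, variance_const_mul, chiVar]
  ring

lemma integrable_sq_coord {ι : Type*} [Fintype ι] (s : ι → ℝ) (v : NNReal) (i : ι) :
    Integrable (fun y : ι → ℝ => y i ^ 2) (Measure.pi fun i => gaussianReal (s i) v) :=
  (measurePreserving_eval (fun i => gaussianReal (s i) v) i).integrable_comp_of_integrable
    ((memLp_sq_gaussian (s i) v).integrable (by norm_num))

lemma integral_sumsq {ι : Type*} [Fintype ι] (s : ι → ℝ) (v : NNReal) :
    ∫ y, ∑ i, y i ^ 2 ∂(Measure.pi fun i => gaussianReal (s i) v)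
      = Fintype.card ι * v + ∑ i, s i ^ 2 := by
  rw [integral_finsetSum _ fun i _ => integrable_sq_coord s v i]
  have : ∀ i, ∫ y : ι → ℝ, y i ^ 2 ∂(Measure.pi fun i => gaussianReal (s i) v)
      = v + s i ^ 2 := fun i => by
    rw [integral_comp_eval (μ := fun i => gaussianReal (s i) v) (f := fun x : ℝ => x ^ 2)
      (by fun_prop), integral_sq_gaussian]
  simp [this, Finset.sum_add_distrib]

/-- Chebyshev: under pure noise the empirical second moment is rarely below `c σ²`, `c < 1`. -/
lemma sumsq_lower {ι : Type*} [Fintype ι] [Nonempty ι] {σ c : ℝ} (hσ : 0 < σ) (hc : c < 1) :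
    (Measure.pi fun _ : ι => gaussianReal 0 (Real.toNNReal (σ ^ 2))).real
      {y | ∑ i, y i ^ 2 < c * σ ^ 2 * Fintype.card ι}
      ≤ chiVar / ((1 - c) ^ 2 * Fintype.card ι) := by
  set μ := Measure.pi fun _ : ι => gaussianReal 0 (Real.toNNReal (σ ^ 2)) with hμ
  have hK : (0 : ℝ) < Fintype.card ι := by exact_mod_cast Fintype.card_pos
  have hL : ∀ i : ι, MemLp (fun y : ι → ℝ => y i ^ 2) 2 μ := fun i =>
    (memLp_sq_gaussian 0 _).comp_measurePreserving
      (measurePreserving_eval (fun _ : ι => gaussianReal 0 (Real.toNNReal (σ ^ 2))) i)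
  have hS : MemLp (fun y : ι → ℝ => ∑ i, y i ^ 2) 2 μ := memLp_finsetSum _ fun i _ => hL i
  have hmean : μ[fun y : ι → ℝ => ∑ i, y i ^ 2] = Fintype.card ι * σ ^ 2 := by
    have := integral_sumsq (fun _ : ι => (0 : ℝ)) (Real.toNNReal (σ ^ 2))
    rw [hμ, this]; simp [sq_nonneg]
  have hvar : Var[fun y : ι → ℝ => ∑ i, y i ^ 2; μ] = Fintype.card ι * (σ ^ 4 * chiVar) := by
    have h := variance_sum_pi (μ := fun _ : ι => gaussianReal 0 (Real.toNNReal (σ ^ 2)))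
      (X := fun _ x => x ^ 2) (fun i => memLp_sq_gaussian 0 _)
    simp only [variance_sq_gaussian] at h
    have h2 : (∑ i : ι, fun ω : ι → ℝ => ω i ^ 2) = fun y : ι → ℝ => ∑ i, y i ^ 2 := by
      funext y; simp
    rw [h2] at h
    rw [hμ, h]; simp
  have hd : 0 < (1 - c) * σ ^ 2 * Fintype.card ι := by
    have : 0 < 1 - c := by linarith
    positivity
  have hch := meas_ge_le_variance_div_sq hS hd
  rw [hmean, hvar] at hch
  have hle : μ {y | ∑ i, y i ^ 2 < c * σ ^ 2 * Fintype.card ι} ≤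
      μ {y | (1 - c) * σ ^ 2 * Fintype.card ι
        ≤ |∑ i, y i ^ 2 - Fintype.card ι * σ ^ 2|} := by
    apply measure_mono
    intro y hy
    simp only [Set.mem_ofPred_eq] at hy ⊢
    rw [le_abs]; right; linarith
  have hV : 0 ≤ chiVar := variance_nonneg _ _
  refine (ENNReal.toReal_mono (by simp) (hle.trans hch)).trans ?_
  rw [ENNReal.toReal_ofReal (by positivity)]
  apply le_of_eq
  have : 1 - c ≠ 0 := by linarith
  field_simp

/-- Markov's inequality for the empirical second moment. -/
lemma sumsq_upper {ι : Type*} [Fintype ι] [Nonempty ι] (s : ι → ℝ) {σ K : ℝ} (hσ : 0 < σ)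
    (hK : 0 < K) :
    (Measure.pi fun i => gaussianReal (s i) (Real.toNNReal (σ ^ 2))).real
      {y | K * (Fintype.card ι * σ ^ 2 + ∑ i, s i ^ 2) ≤ ∑ i, y i ^ 2} ≤ 1 / K := by
  have h := mul_meas_ge_le_integral_of_nonneg
    (μ := Measure.pi fun i => gaussianReal (s i) (Real.toNNReal (σ ^ 2)))
    (f := fun y : ι → ℝ => ∑ i, y i ^ 2)
    (ae_of_all _ fun y => Finset.sum_nonneg fun i _ => sq_nonneg _)
    (integrable_finsetSum _ fun i _ => integrable_sq_coord s _ i)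
    (K * (Fintype.card ι * σ ^ 2 + ∑ i, s i ^ 2))
  rw [integral_sumsq, Real.coe_toNNReal _ (sq_nonneg σ)] at h
  have hc : (0 : ℝ) < Fintype.card ι := by exact_mod_cast Fintype.card_pos
  have hE : 0 < Fintype.card ι * σ ^ 2 + ∑ i, s i ^ 2 := by
    have : 0 ≤ ∑ i, s i ^ 2 := Finset.sum_nonneg fun i _ => sq_nonneg _
    positivity
  rw [le_div_iff₀ hK]
  refine le_of_mul_le_mul_left ?_ hE
  linarith

/-- A `[0,1]`-valued function vanishing off `E` has integral at most the mass of `E`; neither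
`f` nor `E` has to be measurable. -/
lemma integral_le_real_of_le {Ω : Type*} [MeasurableSpace Ω] (μ : Measure Ω)
    [IsProbabilityMeasure μ] (f : Ω → ℝ) (E : Set Ω) (h0 : ∀ y, 0 ≤ f y) (h1 : ∀ y, f y ≤ 1)
    (hE : ∀ y, y ∉ E → f y = 0) : ∫ y, f y ∂μ ≤ μ.real E := by
  have hmeas : MeasurableSet (toMeasurable μ E) := measurableSet_toMeasurable μ E
  have h : ∫ y, f y ∂μ ≤ ∫ y, (toMeasurable μ E).indicator (fun _ => (1 : ℝ)) y ∂μ := by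
    apply integral_mono_of_nonneg (ae_of_all _ h0)
      ((integrable_const 1).indicator hmeas)
    refine ae_of_all _ fun y => ?_
    by_cases hy : y ∈ E
    · simpa [Set.indicator_of_mem (subset_toMeasurable μ E hy)] using h1 y
    · simp only [hE y hy]
      exact Set.indicator_nonneg (fun _ _ => zero_le_one) y
  refine h.trans_eq ?_
  rw [integral_indicator_const _ hmeas]
  simp [measureReal_def, measure_toMeasurable]

/-! ### Non-asymptotic error bounds -/

instance matLawV_isProb (N M : ℕ) (σ : ℝ) (S : Fin N → Fin M → ℝ) :
    IsProbabilityMeasure (matLawV N M σ S) := by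
  unfold matLawV; infer_instance

lemma psiHatStar_mem (N M n m : ℕ) (H T : ℝ) (y : (Fin N × Fin M) → ℝ) :
    0 ≤ psiHatStar N M n m H T y ∧ psiHatStar N M n m H T y ≤ 1 := by
  unfold psiHatStar
  split_ifs <;> simp

/-- First-type error: the terms bound the probabilities that `σ̂² < c σ²`, that
`t_lin > √c σ H`, and (by a union bound over all submatrices) that `t_max > √c σ T`. -/
lemma typeI_bound {N M n m : ℕ} (hn : 1 ≤ n) (hnN : n ≤ N) (hm : 1 ≤ m) (hmM : m ≤ M)
    {σ H T c : ℝ} (hσ : 0 < σ) (hH : 0 ≤ H) (hT : 0 ≤ T) (hc0 : 0 < c) (hc : c < 1) :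
    ∫ y, psiHatStar N M n m H T y ∂(matLawV N M σ fun _ _ => 0) ≤
      chiVar / ((1 - c) ^ 2 * ((N : ℝ) * M)) + Real.exp (-(c * H ^ 2 / 2))
        + (Gnm N M n m : ℝ) * Real.exp (-(c * T ^ 2 / 2)) := by
  set μ := matLawV N M σ fun _ _ => 0 with hμ
  have hN0 : 0 < N := by omega
  have hM0 : 0 < M := by omega
  have : Nonempty (Fin N × Fin M) := ⟨(⟨0, hN0⟩, ⟨0, hM0⟩)⟩
  have hNr : (0 : ℝ) < N := by exact_mod_cast hN0
  have hMr : (0 : ℝ) < M := by exact_mod_cast hM0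
  have hnr : (0 : ℝ) < n := by exact_mod_cast hn
  have hmr : (0 : ℝ) < m := by exact_mod_cast hm
  have hcard : ((Fintype.card (Fin N × Fin M) : ℕ) : ℝ) = (N : ℝ) * M := by simp
  have hsc : (Real.sqrt c) ^ 2 = c := Real.sq_sqrt hc0.le
  -- Gaussian tail for the sum over an arbitrary set of entries, normalised by its cardinality
  have tail : ∀ (F : Finset (Fin N × Fin M)) (k u : ℝ), 0 < k → (F.card : ℝ) = k → 0 ≤ u →
      μ.real {y | Real.sqrt c * σ * u * Real.sqrt k ≤ ∑ ij ∈ F, y ij}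
        ≤ Real.exp (-(c * u ^ 2 / 2)) := by
    intro F k u hk hF hu
    have h := noise_tail (fun _ : Fin N × Fin M => (0 : ℝ)) σ 1 (by norm_num) F
      (u := Real.sqrt c * σ * u * Real.sqrt k) (by positivity)
    simp only [sub_zero, one_mul] at h
    rw [hF] at h
    refine h.trans_eq ?_
    congr 1
    rw [mul_pow, mul_pow, mul_pow, hsc, Real.sq_sqrt hk.le]
    field_simp
  let E1 : Set ((Fin N × Fin M) → ℝ) :=
    {y | ∑ ij, y ij ^ 2 < c * σ ^ 2 * Fintype.card (Fin N × Fin M)}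
  let E2 : Set ((Fin N × Fin M) → ℝ) :=
    {y | Real.sqrt c * σ * H * Real.sqrt ((N : ℝ) * M) ≤ ∑ ij ∈ Finset.univ, y ij}
  let I : Finset (Finset (Fin N) × Finset (Fin M)) :=
    Finset.powersetCard n Finset.univ ×ˢ Finset.powersetCard m Finset.univ
  let E3 : Finset (Fin N) × Finset (Fin M) → Set ((Fin N × Fin M) → ℝ) := fun AB =>
    {y | Real.sqrt c * σ * T * Real.sqrt ((n : ℝ) * m) ≤ ∑ ij ∈ AB.1 ×ˢ AB.2, y ij}
  have h1 : μ.real E1 ≤ chiVar / ((1 - c) ^ 2 * ((N : ℝ) * M)) := by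
    rw [← hcard]
    exact sumsq_lower (ι := Fin N × Fin M) hσ hc
  have h2 : μ.real E2 ≤ Real.exp (-(c * H ^ 2 / 2)) :=
    tail Finset.univ _ H (by positivity) (by simp) hH
  have h3 : μ.real (⋃ AB ∈ I, E3 AB) ≤ (Gnm N M n m : ℝ) * Real.exp (-(c * T ^ 2 / 2)) := by
    refine (measureReal_biUnion_finset_le I E3).trans ?_
    have hI : I.card = Gnm N M n m := by
      simp [I, Gnm, Finset.card_product, Finset.card_powersetCard]
    rw [← hI, ← nsmul_eq_mul]
    refine Finset.sum_le_card_nsmul _ _ _ fun AB hAB => ?_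
    simp only [I, Finset.mem_product, Finset.mem_powersetCard, Finset.subset_univ,
      true_and] at hAB
    exact tail (AB.1 ×ˢ AB.2) _ T (by positivity)
      (by rw [Finset.card_product, hAB.1, hAB.2]; push_cast; rfl) hT
  have hfin : μ.real (E1 ∪ E2 ∪ ⋃ AB ∈ I, E3 AB) ≤
      chiVar / ((1 - c) ^ 2 * ((N : ℝ) * M)) + Real.exp (-(c * H ^ 2 / 2))
        + (Gnm N M n m : ℝ) * Real.exp (-(c * T ^ 2 / 2)) := by
    have a1 := measureReal_union_le (μ := μ) (E1 ∪ E2) (⋃ AB ∈ I, E3 AB)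
    have a2 := measureReal_union_le (μ := μ) E1 E2
    linarith
  refine (integral_le_real_of_le μ _ _ (fun y => (psiHatStar_mem N M n m H T y).1)
    (fun y => (psiHatStar_mem N M n m H T y).2) fun y hy => ?_).trans hfin
  simp only [Set.mem_union, not_or] at hy
  obtain ⟨⟨hy1, hy2⟩, hy3⟩ := hy
  have hsh : Real.sqrt c * σ ≤ sigmaHat N M y := by
    unfold sigmaHat
    apply Real.le_sqrt_of_sq_le
    rw [mul_pow, hsc, le_div_iff₀ (by positivity)]
    have : ¬ (∑ ij, y ij ^ 2 < c * σ ^ 2 * Fintype.card (Fin N × Fin M)) := hy1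
    rw [hcard] at this
    linarith
  have hsp : 0 < sigmaHat N M y := lt_of_lt_of_le (by positivity) hsh
  have c1 : ¬ (H < tlin N M y / sigmaHat N M y) := by
    intro h
    rw [lt_div_iff₀ hsp] at h
    apply hy2
    change Real.sqrt c * σ * H * Real.sqrt ((N : ℝ) * M) ≤ ∑ ij ∈ Finset.univ, y ij
    rw [← le_div_iff₀ (by positivity)]
    have h' : Real.sqrt c * σ * H ≤ H * sigmaHat N M y := by
      rw [mul_comm H]; exact mul_le_mul_of_nonneg_right hsh hH
    exact h'.trans h.le
  have c2 : ¬ (T < tmax N M n m y / sigmaHat N M y) := by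
    intro h
    rw [lt_div_iff₀ hsp] at h
    have hne : {v | ∃ (A : Finset (Fin N)) (B : Finset (Fin M)),
        A.card = n ∧ B.card = m ∧ v = YC N M y A B}.Nonempty := by
      obtain ⟨A, -, hA⟩ := Finset.exists_subset_card_eq (s := (Finset.univ : Finset (Fin N)))
        (n := n) (by simpa using hnN)
      obtain ⟨B, -, hB⟩ := Finset.exists_subset_card_eq (s := (Finset.univ : Finset (Fin M)))
        (n := m) (by simpa using hmM)
      exact ⟨_, A, B, hA, hB, rfl⟩
    obtain ⟨v, ⟨A, B, hA, hB, rfl⟩, hv⟩ := exists_lt_of_lt_csSup hne h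
    apply hy3
    simp only [Set.mem_iUnion]
    refine ⟨(A, B), by simp [I, hA, hB], ?_⟩
    change Real.sqrt c * σ * T * Real.sqrt ((n : ℝ) * m) ≤ ∑ ij ∈ A ×ˢ B, y ij
    rw [← le_div_iff₀ (by positivity), Finset.sum_product]
    unfold YC at hv
    rw [hA, hB] at hv
    have h' : Real.sqrt c * σ * T ≤ T * sigmaHat N M y := by
      rw [mul_comm T]; exact mul_le_mul_of_nonneg_right hsh hT
    exact h'.trans hv.le
  simp [psiHatStar, c1, c2]

/-- Second-type error, through the linear part of the test alone. Here `L` is the normalised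
mean of `t_lin / σ` and `ε` the normalised maximal entry; since `0 ≤ s ≤ ε σ √(NM)`, one has
`(NM)⁻¹ Σ s² ≤ σ² ε L`, so that Markov's inequality gives `σ̂² < K σ² (1 + ε L)` with
probability at least `1 - 1/K`. -/
lemma typeII_bound {N M n m : ℕ} (hN0 : 0 < N) (hM0 : 0 < M)
    {σ H T K L ε : ℝ} {S : Fin N → Fin M → ℝ} (hσ : 0 < σ) (hK : 0 < K)
    (hS : ∀ i j, 0 ≤ S i j)
    (hSε : ∀ i j, S i j ≤ ε * (σ * Real.sqrt ((N : ℝ) * M)))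
    (hL : ∑ ij : Fin N × Fin M, S ij.1 ij.2 = L * (σ * Real.sqrt ((N : ℝ) * M)))
    (hL0 : 0 < L) (hcond : H ^ 2 * (K * (1 + ε * L)) < L ^ 2 / 4) :
    ∫ y, (1 - psiHatStar N M n m H T y) ∂(matLawV N M σ S) ≤
      1 / K + Real.exp (-(L ^ 2 / 8)) := by
  set μ := matLawV N M σ S with hμ
  have : Nonempty (Fin N × Fin M) := ⟨(⟨0, hN0⟩, ⟨0, hM0⟩)⟩
  have hNr : (0 : ℝ) < N := by exact_mod_cast hN0
  have hMr : (0 : ℝ) < M := by exact_mod_cast hM0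
  have hcard : ((Fintype.card (Fin N × Fin M) : ℕ) : ℝ) = (N : ℝ) * M := by simp
  have hNM : 0 < (N : ℝ) * M := by positivity
  set R := Real.sqrt ((N : ℝ) * M) with hR
  have hR0 : 0 < R := Real.sqrt_pos.2 hNM
  have hR2 : R ^ 2 = (N : ℝ) * M := Real.sq_sqrt hNM.le
  have hsq : ∑ ij : Fin N × Fin M, S ij.1 ij.2 ^ 2 ≤ ε * L * σ ^ 2 * ((N : ℝ) * M) := by
    calc ∑ ij : Fin N × Fin M, S ij.1 ij.2 ^ 2
        ≤ ∑ ij : Fin N × Fin M, (ε * (σ * R)) * S ij.1 ij.2 := by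
          refine Finset.sum_le_sum fun ij _ => ?_
          rw [sq]
          exact mul_le_mul_of_nonneg_right (hSε _ _) (hS _ _)
      _ = ε * L * σ ^ 2 * ((N : ℝ) * M) := by
          rw [← Finset.mul_sum, hL, ← hR2]; ring
  let E1 : Set ((Fin N × Fin M) → ℝ) :=
    {y | K * (Fintype.card (Fin N × Fin M) * σ ^ 2 + ∑ ij : Fin N × Fin M, S ij.1 ij.2 ^ 2)
      ≤ ∑ ij, y ij ^ 2}
  let E2 : Set ((Fin N × Fin M) → ℝ) :=
    {y | L / 2 * (σ * R) ≤ ∑ ij ∈ Finset.univ, (-1) * (y ij - S ij.1 ij.2)}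
  have h1 : μ.real E1 ≤ 1 / K :=
    sumsq_upper (fun ij : Fin N × Fin M => S ij.1 ij.2) hσ hK
  have h2 : μ.real E2 ≤ Real.exp (-(L ^ 2 / 8)) := by
    have h := noise_tail (fun ij : Fin N × Fin M => S ij.1 ij.2) σ (-1) (by norm_num)
      Finset.univ (u := L / 2 * (σ * R)) (by positivity)
    refine h.trans_eq ?_
    congr 1
    rw [Finset.card_univ, hcard, ← hR2]
    field_simp
    ring
  have hfin := measureReal_union_le (μ := μ) E1 E2
  have hp := fun y => psiHatStar_mem N M n m H T y
  refine (integral_le_real_of_le μ _ (E1 ∪ E2) (fun y => by linarith [(hp y).2])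
    (fun y => by linarith [(hp y).1]) fun y hy => ?_).trans (by linarith)
  simp only [Set.mem_union, not_or] at hy
  obtain ⟨hy1, hy2⟩ := hy
  have hy1 : ∑ ij, y ij ^ 2
      < K * (Fintype.card (Fin N × Fin M) * σ ^ 2 + ∑ ij : Fin N × Fin M, S ij.1 ij.2 ^ 2) :=
    not_le.1 hy1
  have hy2 : ∑ ij ∈ Finset.univ, (-1) * (y ij - S ij.1 ij.2) < L / 2 * (σ * R) := not_le.1 hy2
  rw [← Finset.mul_sum, Finset.sum_sub_distrib, hL] at hy2
  have ht : L / 2 * σ < tlin N M y := by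
    unfold tlin
    rw [← hR, lt_div_iff₀ hR0]
    linarith
  have hhat : sigmaHat N M y ^ 2 ≤ K * (1 + ε * L) * σ ^ 2 := by
    unfold sigmaHat
    rw [Real.sq_sqrt (div_nonneg (Finset.sum_nonneg fun i _ => sq_nonneg _) hNM.le),
      div_le_iff₀ hNM]
    rw [hcard] at hy1
    nlinarith [mul_le_mul_of_nonneg_left hsq hK.le]
  have hsp : 0 < sigmaHat N M y := by
    unfold sigmaHat
    apply Real.sqrt_pos.2 (div_pos _ hNM)
    by_contra hneg
    have hz : ∑ ij, y ij ^ 2 = 0 :=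
      le_antisymm (not_lt.1 hneg) (Finset.sum_nonneg fun i _ => sq_nonneg _)
    rw [Finset.sum_eq_zero_iff_of_nonneg fun i _ => sq_nonneg _] at hz
    have hz' : ∀ ij, y ij = 0 := fun ij => by simpa using hz ij (Finset.mem_univ _)
    have : tlin N M y = 0 := by simp [tlin, hz']
    have : 0 < L / 2 * σ := by positivity
    linarith
  have c1 : H < tlin N M y / sigmaHat N M y := by
    rw [lt_div_iff₀ hsp]
    refine lt_trans ?_ ht
    apply lt_of_pow_lt_pow_left₀ 2 (by positivity)
    calc (H * sigmaHat N M y) ^ 2 ≤ H ^ 2 * (K * (1 + ε * L) * σ ^ 2) := by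
          rw [mul_pow]; exact mul_le_mul_of_nonneg_left hhat (sq_nonneg _)
      _ = H ^ 2 * (K * (1 + ε * L)) * σ ^ 2 := by ring
      _ < L ^ 2 / 4 * σ ^ 2 := mul_lt_mul_of_pos_right hcond (by positivity)
      _ = (L / 2 * σ) ^ 2 := by ring
  have : psiHatStar N M n m H T y = 1 := by
    apply le_antisymm (hp y).2
    unfold psiHatStar
    rw [if_pos c1]
    exact le_max_left _ _
  linarith

/-! ### Passage to the limit -/

lemma div_le_Gnm {N M n m : ℕ} (hn : 1 ≤ n) (hnN : n ≤ N) (hmM : m ≤ M) :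
    (N : ℝ) / n ≤ (Gnm N M n m : ℝ) := by
  have hn0 : (0 : ℝ) < n := by exact_mod_cast hn
  rw [div_le_iff₀ hn0]
  obtain ⟨k, rfl⟩ : ∃ k, n = k + 1 := ⟨n - 1, by omega⟩
  obtain ⟨l, rfl⟩ : ∃ l, N = l + 1 := ⟨N - 1, by omega⟩
  have h := Nat.add_one_mul_choose_eq l k
  have h1 : 1 ≤ l.choose k := Nat.choose_pos (by omega)
  have h2 : 1 ≤ M.choose m := Nat.choose_pos hmM
  have : l + 1 ≤ Gnm (l + 1) M (k + 1) m * (k + 1) := by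
    unfold Gnm
    calc l + 1 ≤ (l + 1) * l.choose k := Nat.le_mul_of_pos_right _ h1
      _ = (l + 1).choose (k + 1) * (k + 1) := h
      _ ≤ (l + 1).choose (k + 1) * M.choose m * (k + 1) :=
        Nat.mul_le_mul_right _ (Nat.le_mul_of_pos_right _ h2)
  exact_mod_cast this

/-- Theorem 5 (unknown variance): under the stated conditions on `a/σ`, the
studentized test `ψ̂*` with `H → ∞`, `H = O((a² n m p q/σ²)^{1/4})` and
`T_{nm} = √((2+δ) log G_{nm})` for sufficiently small `δ > 0` has first-type
error tending to `0` and second-type error tending to `0` along any family of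
alternatives `S ∈ S_{nm,a}` with `max_{i,j} s_{ij}/(σ√(NM)) → 0`. -/
theorem stmt9 (N M n m : ℕ → ℕ) (a σ H : ℕ → ℝ)
    (hb : ∀ t, 1 ≤ n t ∧ n t ≤ N t ∧ 1 ≤ m t ∧ m t ≤ M t)
    (ha : ∀ t, 0 < a t) (hσ : ∀ t, 0 < σ t)
    (hN : Tendsto N atTop atTop) (hM : Tendsto M atTop atTop)
    (hn : Tendsto n atTop atTop) (hm : Tendsto m atTop atTop)
    (hp : Tendsto (fun t => (n t : ℝ) / N t) atTop (nhds 0))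
    (hq : Tendsto (fun t => (m t : ℝ) / M t) atTop (nhds 0))
    (hH : Tendsto H atTop atTop)
    (hHO : ∃ C : ℝ, ∀ t, H t ≤ C *
      (a t ^ 2 * ((n t : ℝ) * m t * ((n t : ℝ) / N t) * ((m t : ℝ) / M t)) / σ t ^ 2)
        ^ ((1 : ℝ) / 4))
    (hcond :
      Tendsto (fun t => a t / σ t *
          Real.sqrt ((n t : ℝ) * m t * ((n t : ℝ) / N t) * ((m t : ℝ) / M t)))
        atTop atTop ∨
      1 < Filter.liminf (fun t =>
          a t / σ t * Real.sqrt ((n t : ℝ) * m t) /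
            Real.sqrt (2 * ((n t : ℝ) * Real.log ((N t : ℝ) / n t) +
              (m t : ℝ) * Real.log ((M t : ℝ) / m t)))) atTop) :
    ∃ δ₀ : ℝ, 0 < δ₀ ∧ ∀ δ : ℝ, 0 < δ → δ ≤ δ₀ →
      (Tendsto (fun t =>
          ∫ y, psiHatStar (N t) (M t) (n t) (m t) (H t)
              (Real.sqrt ((2 + δ) * Real.log (Gnm (N t) (M t) (n t) (m t) : ℝ))) y
            ∂(matLawV (N t) (M t) (σ t) fun _ _ => 0))
        atTop (nhds 0)) ∧
      ∀ S : (t : ℕ) → Fin (N t) → Fin (M t) → ℝ,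
        (∀ t, S t ∈ SAlt (N t) (M t) (n t) (m t) (a t)) →
        Tendsto (fun t =>
            (⨆ ij : Fin (N t) × Fin (M t), S t ij.1 ij.2) /
              (σ t * Real.sqrt ((N t : ℝ) * M t)))
          atTop (nhds 0) →
        Tendsto (fun t =>
            ∫ y, (1 - psiHatStar (N t) (M t) (n t) (m t) (H t)
                (Real.sqrt ((2 + δ) * Real.log (Gnm (N t) (M t) (n t) (m t) : ℝ))) y)
              ∂(matLawV (N t) (M t) (σ t) (S t)))
          atTop (nhds 0) := by
  obtain ⟨C, hC⟩ := hHO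
  -- `r ^ 4` is the squared signal-to-noise ratio `a² n m p q / σ²`
  set r : ℕ → ℝ := fun t =>
    (a t ^ 2 * ((n t : ℝ) * m t * ((n t : ℝ) / N t) * ((m t : ℝ) / M t)) / σ t ^ 2)
      ^ ((1 : ℝ) / 4) with hr
  have hr0 : ∀ t, 0 ≤ r t := fun t => by
    have := (hσ t).le; have := (ha t).le
    simp only [hr]; positivity
  have hr4 : ∀ t, r t ^ 4 =
      a t ^ 2 * ((n t : ℝ) * m t * ((n t : ℝ) / N t) * ((m t : ℝ) / M t)) / σ t ^ 2 := fun t => by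
    have := (hσ t).le; have := (ha t).le
    simp only [hr]
    rw [← Real.rpow_natCast, ← Real.rpow_mul (by positivity)]
    norm_num
  -- a positive constant in place of `C`
  set D := max C 1 with hD
  have hD0 : 0 < D := lt_of_lt_of_le one_pos (le_max_right _ _)
  have hHD : ∀ t, H t ≤ D * r t := fun t =>
    (hC t).trans (mul_le_mul_of_nonneg_right (le_max_left _ _) (hr0 t))
  have hrt : Tendsto r atTop atTop := by
    refine tendsto_atTop_mono (fun t => ?_) (hH.atTop_div_const hD0)
    rw [div_le_iff₀ hD0]; linarith [hHD t]
  have hNr : ∀ t, (0 : ℝ) < N t := fun t => by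
    have := hb t; exact_mod_cast (by omega : 0 < N t)
  have hMr : ∀ t, (0 : ℝ) < M t := fun t => by
    have := hb t; exact_mod_cast (by omega : 0 < M t)
  have hnr : ∀ t, (0 : ℝ) < n t := fun t => by
    have := hb t; exact_mod_cast (by omega : 0 < n t)
  have hmr : ∀ t, (0 : ℝ) < m t := fun t => by
    have := hb t; exact_mod_cast (by omega : 0 < m t)
  refine ⟨1, one_pos, fun δ hδ _ => ⟨?_, ?_⟩⟩
  · -- chosen so that `c (1 + δ/2) > 1`
    set c : ℝ := 1 / (1 + δ / 4) with hc
    have hc0 : 0 < c := by positivity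
    have hc1 : c < 1 := by rw [hc, div_lt_one (by positivity)]; linarith
    set κ : ℝ := c * (1 + δ / 2) - 1 with hκ
    have hκ0 : 0 < κ := by
      rw [hκ, hc, one_div, inv_mul_eq_div, sub_pos, one_lt_div (by positivity)]; linarith
    have hG1 : ∀ t, 1 ≤ Gnm (N t) (M t) (n t) (m t) := fun t =>
      Nat.mul_pos (Nat.choose_pos (hb t).2.1) (Nat.choose_pos (hb t).2.2.2)
    have hGt : Tendsto (fun t => (Gnm (N t) (M t) (n t) (m t) : ℝ)) atTop atTop := by
      have hinv : Tendsto (fun t => ((n t : ℝ) / N t)⁻¹) atTop atTop :=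
        (tendsto_nhdsWithin_iff.2 ⟨hp, Eventually.of_forall fun t =>
          div_pos (hnr t) (hNr t)⟩).inv_tendsto_nhdsGT_zero
      refine tendsto_atTop_mono (fun t => ?_) hinv
      rw [inv_div]
      exact div_le_Gnm (hb t).1 (hb t).2.1 (hb t).2.2.2
    have hT1 : Tendsto (fun t => chiVar / ((1 - c) ^ 2 * ((N t : ℝ) * M t))) atTop (nhds 0) := by
      apply Tendsto.div_atTop tendsto_const_nhds
      apply Tendsto.const_mul_atTop (by have : 0 < 1 - c := by linarith
                                        positivity)
      exact (tendsto_natCast_atTop_atTop.comp hN).atTop_mul_atTop₀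
        (tendsto_natCast_atTop_atTop.comp hM)
    have hT2 : Tendsto (fun t => Real.exp (-(c * H t ^ 2 / 2))) atTop (nhds 0) := by
      apply Real.tendsto_exp_neg_atTop_nhds_zero.comp
      apply Tendsto.atTop_div_const (by norm_num)
      exact ((tendsto_pow_atTop (by norm_num)).comp hH).const_mul_atTop hc0
    have hT3 : Tendsto (fun t => (Gnm (N t) (M t) (n t) (m t) : ℝ) ^ (-κ)) atTop (nhds 0) :=
      (tendsto_rpow_neg_atTop hκ0).comp hGt
    have hsum := (hT1.add hT2).add hT3
    simp only [add_zero] at hsum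
    refine tendsto_of_tendsto_of_tendsto_of_le_of_le' tendsto_const_nhds hsum
      (Eventually.of_forall fun t => integral_nonneg fun y => (psiHatStar_mem _ _ _ _ _ _ y).1) ?_
    filter_upwards [hH.eventually_ge_atTop 0] with t hHt
    have hG : (1 : ℝ) ≤ Gnm (N t) (M t) (n t) (m t) := by exact_mod_cast hG1 t
    have hlog := Real.log_nonneg hG
    have h := typeI_bound (hb t).1 (hb t).2.1 (hb t).2.2.1 (hb t).2.2.2 (hσ t) hHt
      (Real.sqrt_nonneg ((2 + δ) * Real.log (Gnm (N t) (M t) (n t) (m t) : ℝ))) hc0 hc1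
    refine h.trans_eq ?_
    congr 1
    rw [Real.sq_sqrt (by positivity), Real.rpow_def_of_pos (by linarith)]
    nth_rewrite 1 [← Real.exp_log (show (0 : ℝ) < Gnm (N t) (M t) (n t) (m t) by linarith)]
    rw [← Real.exp_add]
    congr 1
    rw [hκ]; ring
  · intro S hS hε
    set ε : ℕ → ℝ := fun t => (⨆ ij : Fin (N t) × Fin (M t), S t ij.1 ij.2) /
              (σ t * Real.sqrt ((N t : ℝ) * M t)) with hεd
    set L : ℕ → ℝ := fun t => (∑ ij : Fin (N t) × Fin (M t), S t ij.1 ij.2) /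
              (σ t * Real.sqrt ((N t : ℝ) * M t)) with hLd
    have hden : ∀ t, 0 < σ t * Real.sqrt ((N t : ℝ) * M t) := fun t =>
      mul_pos (hσ t) (Real.sqrt_pos.2 (mul_pos (hNr t) (hMr t)))
    have hS0 : ∀ t i j, 0 ≤ S t i j := fun t i j => by
      obtain ⟨A, B, -, -, h1, h2⟩ := hS t
      by_cases h : i ∈ A ∧ j ∈ B
      · exact (ha t).le.trans (h1 i j h.1 h.2)
      · exact (h2 i j h).ge
    have hsumS : ∀ t, (n t : ℝ) * m t * a t ≤ ∑ ij : Fin (N t) × Fin (M t), S t ij.1 ij.2 := by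
      intro t
      obtain ⟨A, B, hA, hB, h1, -⟩ := hS t
      calc (n t : ℝ) * m t * a t = ∑ ij ∈ A ×ˢ B, a t := by
            rw [Finset.sum_const, Finset.card_product, hA, hB, nsmul_eq_mul]; push_cast; ring
        _ ≤ ∑ ij ∈ A ×ˢ B, S t ij.1 ij.2 := Finset.sum_le_sum fun ij hij => by
            rw [Finset.mem_product] at hij
            exact h1 _ _ hij.1 hij.2
        _ ≤ _ := Finset.sum_le_univ_sum_of_nonneg fun ij => hS0 t _ _
    have hLr : ∀ t, r t ^ 2 ≤ L t := by
      intro t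
      have h : (n t : ℝ) * m t * a t / (σ t * Real.sqrt ((N t : ℝ) * M t)) ≤ L t :=
        div_le_div_of_nonneg_right (hsumS t) (hden t).le
      refine le_trans (le_of_eq ?_) h
      have := ha t; have := hnr t; have := hmr t; have := hNr t; have := hMr t; have := hσ t
      rw [← sq_eq_sq₀ (by positivity) (by positivity), ← pow_mul, hr4, div_pow,
        mul_pow (σ t), Real.sq_sqrt (by positivity)]
      field_simp
    have hLt : Tendsto L atTop atTop :=
      tendsto_atTop_mono hLr ((tendsto_pow_atTop (by norm_num)).comp hrt)
    have hexp : Tendsto (fun t => Real.exp (-(L t ^ 2 / 8))) atTop (nhds 0) := by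
      apply Real.tendsto_exp_neg_atTop_nhds_zero.comp
      exact ((tendsto_pow_atTop (by norm_num)).comp hLt).atTop_div_const (by norm_num)
    rw [Metric.tendsto_atTop']
    refine fun η hη => ?_
    set K : ℝ := 2 / η with hK
    have hK0 : 0 < K := by positivity
    have e1 := hexp.eventually_lt_const (half_pos hη)
    have e2 := hε.eventually_lt_const (show 0 < 1 / (8 * (D ^ 2 * K)) by positivity)
    have e3 := hLt.eventually_gt_atTop (8 * (D ^ 2 * K))
    have e4 := hH.eventually_ge_atTop 0
    obtain ⟨t₀, ht₀⟩ := eventually_atTop.1 (e1.and (e2.and (e3.and e4)))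
    refine ⟨t₀, fun t ht => ?_⟩
    obtain ⟨h1, h2, h3, h4⟩ := ht₀ t ht.le
    have hL0 : 0 < L t := lt_trans (by positivity) h3
    rw [lt_div_iff₀ (by positivity)] at h2
    have hH2 : H t ^ 2 ≤ D ^ 2 * L t := by
      calc H t ^ 2 ≤ (D * r t) ^ 2 := pow_le_pow_left₀ h4 (hHD t) 2
        _ = D ^ 2 * r t ^ 2 := by ring
        _ ≤ D ^ 2 * L t := mul_le_mul_of_nonneg_left (hLr t) (by positivity)
    have hSε : ∀ i j, S t i j ≤ ε t * (σ t * Real.sqrt ((N t : ℝ) * M t)) := fun i j => by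
      rw [hεd]
      simp only
      rw [div_mul_cancel₀ _ (hden t).ne']
      exact le_ciSup (f := fun ij : Fin (N t) × Fin (M t) => S t ij.1 ij.2)
        (Set.finite_range _).bddAbove (i, j)
    have hε0 : 0 ≤ ε t := div_nonneg (Real.iSup_nonneg fun ij => hS0 t _ _) (hden t).le
    have hcond' : H t ^ 2 * (K * (1 + ε t * L t)) < L t ^ 2 / 4 := by
      calc H t ^ 2 * (K * (1 + ε t * L t)) ≤ D ^ 2 * L t * (K * (1 + ε t * L t)) :=
            mul_le_mul_of_nonneg_right hH2 (by positivity)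
        _ = L t * (D ^ 2 * K + (ε t * (8 * (D ^ 2 * K))) * (L t / 8)) := by ring
        _ < L t * (L t / 8 + 1 * (L t / 8)) := by
            refine mul_lt_mul_of_pos_left (add_lt_add_of_lt_of_le (by linarith) ?_) hL0
            exact mul_le_mul_of_nonneg_right h2.le (by positivity)
        _ = L t ^ 2 / 4 := by ring
    have h := typeII_bound (n := n t) (m := m t)
      (T := Real.sqrt ((2 + δ) * Real.log (Gnm (N t) (M t) (n t) (m t) : ℝ)))
      (by exact_mod_cast hNr t) (by exact_mod_cast hMr t) (hσ t) hK0 (hS0 t) hSε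
      (div_mul_cancel₀ _ (hden t).ne').symm hL0 hcond'
    have hnn : 0 ≤ ∫ y, (1 - psiHatStar (N t) (M t) (n t) (m t) (H t)
        (Real.sqrt ((2 + δ) * Real.log (Gnm (N t) (M t) (n t) (m t) : ℝ))) y)
          ∂(matLawV (N t) (M t) (σ t) (S t)) :=
      integral_nonneg fun y => sub_nonneg.2 (psiHatStar_mem _ _ _ _ _ _ y).2
    rw [Real.dist_eq, sub_zero, abs_of_nonneg hnn]
    have hKη : 1 / K = η / 2 := by rw [hK, one_div_div]
    linarith
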